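/- arXiv:2604.08172 — 4 statements merged into one kernel-verified Lean document; each statement's English description precedes it below -/
import Mathlib

section
/- Suppose a matrix C* and vector b* are such that the structural residuals satisfy Σ_{i=1}^N Δs_i = 0 and Σ_{i=1}^N Δs_i · x_iᵀ = 0 (the 3×3 zero matrix). Then the cross-term between the photometric and structural residuals vanishes: Σ_{i=1}^N ⟨Δp_i, Δs_i⟩ = 0, where ⟨·,·⟩ is the Euclidean inner product on ℝ³. -/
open Finset Matrix

/-- If the structural residuals `Δsᵢ = yᵢ − C*·xᵢ − b*` satisfy
`∑ i, Δsᵢ = 0` and `∑ i, Δsᵢ · xᵢᵀ = 0`, then the cross-term between the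
photometric residuals `Δpᵢ = (C* − I)·xᵢ + b*` and the structural residuals
vanishes: `∑ i, ⟨Δpᵢ, Δsᵢ⟩ = 0`. -/
theorem pal_cross_term_vanishes
    (N : ℕ) (hN : 0 < N)
    (x y : Fin N → Fin 3 → ℝ)
    (Cstar : Matrix (Fin 3) (Fin 3) ℝ) (bstar : Fin 3 → ℝ)
    (h1 : (∑ i, (y i - Cstar.mulVec (x i) - bstar)) = 0)
    (h2 : (∑ i, vecMulVec (y i - Cstar.mulVec (x i) - bstar) (x i)) = 0) :
    (∑ i, ∑ j, ((Cstar - 1).mulVec (x i) + bstar) j *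
      (y i - Cstar.mulVec (x i) - bstar) j) = 0 := by
  generalize Cstar - 1 = D
  generalize hs : (fun i => y i - Cstar.mulVec (x i) - bstar) = s
  have hs' : ∀ i, y i - Cstar.mulVec (x i) - bstar = s i := fun i => congrFun hs i
  simp only [hs'] at h1 h2 ⊢
  have e1 : ∀ j, ∑ i, s i j = 0 := fun j => by
    have h := congrFun h1 j
    simpa [Finset.sum_apply] using h
  have e2 : ∀ j k, ∑ i, s i j * x i k = 0 := fun j k => by
    have h := congrFun (congrFun h2 j) k
    simpa [Matrix.sum_apply, vecMulVec_apply] using h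
  rw [Finset.sum_comm]
  refine Finset.sum_eq_zero fun j _ => ?_
  have key : ∀ i, (D.mulVec (x i) + bstar) j * s i j
      = (∑ k, D j k * (s i j * x i k)) + bstar j * s i j := fun i => by
    simp only [Pi.add_apply, mulVec, dotProduct, add_mul, Finset.sum_mul]
    congr 1
    exact Finset.sum_congr rfl fun k _ => by ring
  simp only [key, Finset.sum_add_distrib]
  rw [Finset.sum_comm]
  simp only [← Finset.mul_sum, e1, e2, mul_zero, Finset.sum_const_zero, add_zero]
end

section
/- If (C*, b*) is a global minimizer of the alignment objective J over all real 3×3 matrices C and vectors b ∈ ℝ³, then the total gradient energy of the mean-squared-error loss splits exactly into a photometric and a structural budget: Σ_{i=1}^N ‖(2/N)·(Δp_i + Δs_i)‖² = (4/N²)·Σ_{i=1}^N ‖Δp_i‖² + (4/N²)·Σ_{i=1}^N ‖Δs_i‖². -/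
open Finset Matrix

/-- If `(C*, b*)` globally minimizes the alignment objective
`J(C, b) = ∑ i, ‖C·xᵢ + b − yᵢ‖²`, then the total gradient energy of the MSE
loss splits exactly into a photometric and a structural budget:
`∑ i, ‖(2/N)·(Δpᵢ + Δsᵢ)‖² = (4/N²)·∑ i, ‖Δpᵢ‖² + (4/N²)·∑ i, ‖Δsᵢ‖²`. -/
theorem pal_gradient_energy_split
    (N : ℕ) (hN : 0 < N)
    (x y : Fin N → Fin 3 → ℝ)
    (Cstar : Matrix (Fin 3) (Fin 3) ℝ) (bstar : Fin 3 → ℝ)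
    (hmin : ∀ (C : Matrix (Fin 3) (Fin 3) ℝ) (b : Fin 3 → ℝ),
      (∑ i, ∑ j, ((Cstar.mulVec (x i) + bstar - y i) j) ^ 2) ≤
      (∑ i, ∑ j, ((C.mulVec (x i) + b - y i) j) ^ 2)) :
    (∑ i, ∑ j, ((2 / (N : ℝ)) *
        (((Cstar - 1).mulVec (x i) + bstar) j +
         (y i - Cstar.mulVec (x i) - bstar) j)) ^ 2) =
      (4 / (N : ℝ) ^ 2) *
        (∑ i, ∑ j, (((Cstar - 1).mulVec (x i) + bstar) j) ^ 2) +
      (4 / (N : ℝ) ^ 2) *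
        (∑ i, ∑ j, ((y i - Cstar.mulVec (x i) - bstar) j) ^ 2) := by
  have key : ∀ p s : Fin N → Fin 3 → ℝ,
      (∀ t : ℝ, ∑ i, ∑ j, (s i j) ^ 2 ≤ ∑ i, ∑ j, (t * p i j - s i j) ^ 2) →
      ∑ i, ∑ j, ((2 / (N : ℝ)) * (p i j + s i j)) ^ 2 =
        (4 / (N : ℝ) ^ 2) * (∑ i, ∑ j, (p i j) ^ 2) +
        (4 / (N : ℝ) ^ 2) * (∑ i, ∑ j, (s i j) ^ 2) := by
    intro p s h
    have hP : 0 ≤ ∑ i, ∑ j, (p i j) ^ 2 :=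
      Finset.sum_nonneg fun i _ => Finset.sum_nonneg fun j _ => sq_nonneg _
    have e1 : ∀ t : ℝ, ∑ i, ∑ j, (t * p i j - s i j) ^ 2 =
        t ^ 2 * (∑ i, ∑ j, (p i j) ^ 2) - 2 * t * (∑ i, ∑ j, p i j * s i j)
          + ∑ i, ∑ j, (s i j) ^ 2 := by
      intro t
      simp only [Finset.mul_sum, ← Finset.sum_add_distrib, ← Finset.sum_sub_distrib]
      refine Finset.sum_congr rfl fun i _ => Finset.sum_congr rfl fun j _ => ?_
      ring
    have e2 : ∑ i, ∑ j, ((2 / (N : ℝ)) * (p i j + s i j)) ^ 2 =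
        (4 / (N : ℝ) ^ 2) * (∑ i, ∑ j, (p i j) ^ 2) +
        (4 / (N : ℝ) ^ 2) * (∑ i, ∑ j, (s i j) ^ 2) +
        (8 / (N : ℝ) ^ 2) * (∑ i, ∑ j, p i j * s i j) := by
      simp only [Finset.mul_sum, ← Finset.sum_add_distrib]
      refine Finset.sum_congr rfl fun i _ => Finset.sum_congr rfl fun j _ => ?_
      ring
    rw [e2]
    simp only [e1] at h
    generalize (∑ i, ∑ j, (p i j) ^ 2) = P at *
    generalize (∑ i, ∑ j, p i j * s i j) = X at *
    have hX : X = 0 := by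
      have h1 := h (X / (P + 1))
      have hpos : 0 < P + 1 := by linarith
      have h2 : (X / (P + 1)) * (P + 1) = X := by field_simp
      generalize X / (P + 1) = t at *
      subst h2
      have h3 : t ^ 2 * (P + 2) ≤ 0 := by nlinarith
      have h4 : t = 0 := by
        by_contra hne
        have : 0 < t ^ 2 := by positivity
        nlinarith
      simp [h4]
    rw [hX]; ring
  refine key (fun i => (Cstar - 1).mulVec (x i) + bstar)
    (fun i => y i - Cstar.mulVec (x i) - bstar) ?_
  intro t
  have h := hmin (Cstar + t • (Cstar - 1)) (bstar + t • bstar)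
  refine le_trans (le_of_eq ?_) (h.trans (le_of_eq ?_))
  · refine Finset.sum_congr rfl fun i _ => Finset.sum_congr rfl fun j _ => ?_
    simp only [Pi.add_apply, Pi.sub_apply]
    ring
  · refine Finset.sum_congr rfl fun i _ => Finset.sum_congr rfl fun j _ => ?_
    simp only [Matrix.add_mulVec, Matrix.smul_mulVec, Pi.add_apply, Pi.sub_apply,
      Pi.smul_apply, smul_eq_mul]
    ring
end

section
/- (Cross-term under ridge regularization.) Let λ ∈ ℝ and suppose a matrix C* and vector b* are such that the structural residuals satisfy Σ_{i=1}^N Δs_i = 0 and Σ_{i=1}^N Δs_i · x_iᵀ = λ·C*. Then the cross-term between the photometric and structural residuals equals λ·(‖C*‖_F² − tr(C*)): that is, Σ_{i=1}^N ⟨Δp_i, Δs_i⟩ = λ·(‖C*‖_F² − tr(C*)). -/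
open Finset Matrix

/-- Cross-term under ridge regularization. If the structural residuals
`Δsᵢ = yᵢ − C*·xᵢ − b*` satisfy `∑ i, Δsᵢ = 0` and `∑ i, Δsᵢ · xᵢᵀ = λ·C*`,
then the cross-term between the photometric residuals
`Δpᵢ = (C* − I)·xᵢ + b*` and the structural residuals equals
`λ·(‖C*‖_F² − tr(C*))`. -/
theorem pal_ridge_cross_term
    (N : ℕ) (hN : 0 < N)
    (x y : Fin N → Fin 3 → ℝ)
    (lam : ℝ)
    (Cstar : Matrix (Fin 3) (Fin 3) ℝ) (bstar : Fin 3 → ℝ)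
    (h1 : (∑ i, (y i - Cstar.mulVec (x i) - bstar)) = 0)
    (h2 : (∑ i, vecMulVec (y i - Cstar.mulVec (x i) - bstar) (x i))
        = lam • Cstar) :
    (∑ i, ∑ j, ((Cstar - 1).mulVec (x i) + bstar) j *
        (y i - Cstar.mulVec (x i) - bstar) j) =
      lam * ((∑ k, ∑ l, (Cstar k l) ^ 2) - Matrix.trace Cstar) := by
  generalize hs : (fun i => y i - Cstar.mulVec (x i) - bstar) = s at *
  have hs' : ∀ i, y i - Cstar.mulVec (x i) - bstar = s i := fun i => congrFun hs i
  simp only [hs'] at h1 h2 ⊢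
  have e1 : ∀ j, ∑ i, s i j = 0 := fun j => by
    have := congrFun h1 j
    simpa [Finset.sum_apply] using this
  have e2 : ∀ j l, ∑ i, s i j * x i l = lam * Cstar j l := fun j l => by
    have := congrFun (congrFun h2 j) l
    simpa [Matrix.sum_apply, vecMulVec_apply] using this
  have key : (∑ i, ∑ j, ((Cstar - 1).mulVec (x i) + bstar) j * s i j)
      = ∑ j, ((∑ l, (Cstar - 1) j l * ∑ i, s i j * x i l) + bstar j * ∑ i, s i j) := by
    rw [Finset.sum_comm]
    refine Finset.sum_congr rfl fun j _ => ?_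
    simp only [Finset.mul_sum]
    rw [Finset.sum_comm, ← Finset.sum_add_distrib]
    refine Finset.sum_congr rfl fun i _ => ?_
    simp only [Pi.add_apply, mulVec, dotProduct, add_mul, Finset.sum_mul]
    congr 1
    refine Finset.sum_congr rfl fun l _ => ?_
    ring
  rw [key]
  simp only [e1, e2]
  simp [Fin.sum_univ_three, Matrix.trace, Matrix.sub_apply, Matrix.one_apply]
  ring
end

section
/- (Loss decomposition under ridge regularization.) Fix λ > 0 and suppose (C*, b*) is a global minimizer of the ridge objective J_λ(C, b) = Σ_{i=1}^N ‖C·x_i + b − y_i‖² + λ·‖C‖_F². Then the pixel-wise squared error decomposes as Σ_{i=1}^N ‖y_i − x_i‖² = Σ_{i=1}^N ‖Δp_i‖² + Σ_{i=1}^N ‖Δs_i‖² + 2·λ·(‖C*‖_F² − tr(C*)); in particular, the cross-term is of order λ and vanishes continuously as λ → 0. -/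
open Finset Matrix

/-- Loss decomposition under ridge regularization. If `(C*, b*)` globally
minimizes the ridge objective `J_λ(C, b) = ∑ i, ‖C·xᵢ + b − yᵢ‖² + λ·‖C‖_F²`
for `λ > 0`, then the pixel-wise squared error decomposes as
`∑ i, ‖yᵢ − xᵢ‖² = ∑ i, ‖Δpᵢ‖² + ∑ i, ‖Δsᵢ‖² + 2λ·(‖C*‖_F² − tr(C*))`. -/
theorem pal_ridge_loss_decomposition
    (N : ℕ) (hN : 0 < N)
    (x y : Fin N → Fin 3 → ℝ)
    (lam : ℝ) (hlam : 0 < lam)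
    (Cstar : Matrix (Fin 3) (Fin 3) ℝ) (bstar : Fin 3 → ℝ)
    (hmin : ∀ (C : Matrix (Fin 3) (Fin 3) ℝ) (b : Fin 3 → ℝ),
      ((∑ i, ∑ j, ((Cstar.mulVec (x i) + bstar - y i) j) ^ 2) +
        lam * ∑ k, ∑ l, (Cstar k l) ^ 2) ≤
      ((∑ i, ∑ j, ((C.mulVec (x i) + b - y i) j) ^ 2) +
        lam * ∑ k, ∑ l, (C k l) ^ 2)) :
    (∑ i, ∑ j, ((y i - x i) j) ^ 2) =
      (∑ i, ∑ j, (((Cstar - 1).mulVec (x i) + bstar) j) ^ 2) +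
      (∑ i, ∑ j, ((y i - Cstar.mulVec (x i) - bstar) j) ^ 2) +
      2 * lam * ((∑ k, ∑ l, (Cstar k l) ^ 2) - Matrix.trace Cstar) := by
  have hexp : ∀ t : ℝ, 0 ≤
      ((∑ i, ∑ j, (((Cstar - 1).mulVec (x i) + bstar) j) ^ 2) +
        lam * ∑ k, ∑ l, ((Cstar - 1) k l) ^ 2) * (t * t) +
      (2 * ((∑ i, ∑ j, (Cstar.mulVec (x i) + bstar - y i) j *
          (((Cstar - 1).mulVec (x i) + bstar) j)) +
        lam * ∑ k, ∑ l, Cstar k l * (Cstar - 1) k l)) * t + 0 := by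
    intro t
    have h := hmin (Cstar + t • (Cstar - 1)) (bstar + t • bstar)
    have e1 : (∑ i, ∑ j, (((Cstar + t • (Cstar - 1)).mulVec (x i) +
          (bstar + t • bstar) - y i) j) ^ 2) =
        (∑ i, ∑ j, ((Cstar.mulVec (x i) + bstar - y i) j) ^ 2) +
        2 * t * (∑ i, ∑ j, (Cstar.mulVec (x i) + bstar - y i) j *
          (((Cstar - 1).mulVec (x i) + bstar) j)) +
        t * t * (∑ i, ∑ j, (((Cstar - 1).mulVec (x i) + bstar) j) ^ 2) := by
      simp only [Finset.mul_sum, ← Finset.sum_add_distrib]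
      refine Finset.sum_congr rfl fun i _ => Finset.sum_congr rfl fun j _ => ?_
      simp only [Matrix.add_mulVec, Matrix.smul_mulVec, Pi.add_apply, Pi.sub_apply,
        Pi.smul_apply, smul_eq_mul]
      ring
    have e2 : (∑ k, ∑ l, ((Cstar + t • (Cstar - 1)) k l) ^ 2) =
        (∑ k, ∑ l, (Cstar k l) ^ 2) +
        2 * t * (∑ k, ∑ l, Cstar k l * (Cstar - 1) k l) +
        t * t * (∑ k, ∑ l, ((Cstar - 1) k l) ^ 2) := by
      simp only [Finset.mul_sum, ← Finset.sum_add_distrib]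
      refine Finset.sum_congr rfl fun i _ => Finset.sum_congr rfl fun j _ => ?_
      simp only [Matrix.add_apply, Matrix.smul_apply, smul_eq_mul]
      ring
    rw [e1, e2] at h
    linarith
  have hd := discrim_le_zero hexp
  have hL : 2 * ((∑ i, ∑ j, (Cstar.mulVec (x i) + bstar - y i) j *
          (((Cstar - 1).mulVec (x i) + bstar) j)) +
        lam * ∑ k, ∑ l, Cstar k l * (Cstar - 1) k l) = 0 := by
    unfold discrim at hd
    apply pow_eq_zero_iff (two_ne_zero) |>.1
    exact le_antisymm (by linarith) (sq_nonneg _)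
  have e3 : (∑ k, ∑ l, Cstar k l * (Cstar - 1) k l) =
      (∑ k, ∑ l, (Cstar k l) ^ 2) - Matrix.trace Cstar := by
    simp [Fin.sum_univ_three, Matrix.trace, Matrix.one_apply]
    ring
  have e4 : (∑ i, ∑ j, ((y i - x i) j) ^ 2) =
      (∑ i, ∑ j, (((Cstar - 1).mulVec (x i) + bstar) j) ^ 2) +
      (∑ i, ∑ j, ((y i - Cstar.mulVec (x i) - bstar) j) ^ 2) +
      (-2) * (∑ i, ∑ j, (Cstar.mulVec (x i) + bstar - y i) j *
          (((Cstar - 1).mulVec (x i) + bstar) j)) := by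
    simp only [Finset.mul_sum, ← Finset.sum_add_distrib]
    refine Finset.sum_congr rfl fun i _ => Finset.sum_congr rfl fun j _ => ?_
    simp only [Matrix.sub_mulVec, Matrix.one_mulVec, Pi.add_apply, Pi.sub_apply]
    ring
  rw [e3] at hL
  rw [e4]
  linarith
end
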